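/- Let P₀ be the 4 × 4 matrix over GF(4) with rows (α,α²,0,α), (α²,α,α²,0), (1,0,α,α²), (0,1,1,1), and let A = [I₄ | D₄ | P₀] be the 4 × 14 matrix over GF(4) obtained by placing the 4 × 4 identity matrix, the matrix D₄, and P₀ side by side. A field F realizes the column matroid of A if and only if F is infinite or has at least 4 elements. (The universal partial field of this matroid is the 2-regular partial field 𝕌₂.) -/

import Mathlib

/-- A field `F` realizes the column matroid of a matrix `A` over `K` if some matrix `B`
over `F` with the same column index set has exactly the same linearly independent sets
of columns as `A`. -/
def RealizesColumnMatroid {K : Type*} [Field K] {m k : ℕ}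
    (A : Matrix (Fin m) (Fin k) K) (F : Type*) [Field F] : Prop :=
  ∃ (n : ℕ) (B : Matrix (Fin n) (Fin k) F),
    ∀ S : Set (Fin k),
      LinearIndependent F (fun j : S => B.transpose (j : Fin k)) ↔
        LinearIndependent K (fun j : S => A.transpose (j : Fin k))

/-- The matrix `[I₄ | D₄ | P₀]` over `GF(4)`, where `D₄` is the (mod-2) signed incidence
matrix of `K₄` and `P₀` is matrix `XVII` of the paper. -/
noncomputable def matI4D4P0 (α : GaloisField 2 2) :
    Matrix (Fin 4) (Fin 14) (GaloisField 2 2) :=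
  !![1, 0, 0, 0,  1, 1, 1, 0, 0, 0,  α, α ^ 2, 0, α;
     0, 1, 0, 0,  1, 0, 0, 1, 1, 0,  α ^ 2, α, α ^ 2, 0;
     0, 0, 1, 0,  0, 1, 0, 1, 0, 1,  1, 0, α, α ^ 2;
     0, 0, 0, 1,  0, 0, 1, 0, 1, 1,  0, 1, 1, 1]

namespace Stmt18

/-! ### Bivariate integer polynomials as coefficient lists -/

section Poly

variable {F : Type*} [Field F]

/-- evaluation of a univariate integer polynomial -/
def ev1 (b : F) : List ℤ → F
  | [] => 0
  | c :: l => (c : F) + b * ev1 b l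

def add1 : List ℤ → List ℤ → List ℤ
  | [], q => q
  | c :: p, [] => c :: p
  | c :: p, d :: q => (c + d) :: add1 p q

def smul1 (k : ℤ) : List ℤ → List ℤ
  | [] => []
  | c :: p => (k * c) :: smul1 k p

def mul1 : List ℤ → List ℤ → List ℤ
  | [], _ => []
  | c :: p, q => add1 (smul1 c q) (0 :: mul1 p q)

def zero1 : List ℤ → Bool
  | [] => true
  | c :: p => (c == 0) && zero1 p

theorem ev1_add (b : F) : ∀ p q, ev1 b (add1 p q) = ev1 b p + ev1 b q
  | [], q => by simp [add1, ev1]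
  | c :: p, [] => by simp [add1, ev1]
  | c :: p, d :: q => by simp [add1, ev1, ev1_add b p q]; ring

theorem ev1_smul (b : F) (k : ℤ) : ∀ p, ev1 b (smul1 k p) = k * ev1 b p
  | [] => by simp [smul1, ev1]
  | c :: p => by simp [smul1, ev1, ev1_smul b k p]; ring

theorem ev1_mul (b : F) : ∀ p q, ev1 b (mul1 p q) = ev1 b p * ev1 b q
  | [], q => by simp [mul1, ev1]
  | c :: p, q => by simp [mul1, ev1, ev1_add, ev1_smul, ev1_mul b p q]; ring

theorem ev1_zero (b : F) : ∀ p, zero1 p = true → ev1 b p = 0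
  | [], _ => rfl
  | c :: p, h => by
    simp only [zero1, Bool.and_eq_true, beq_iff_eq] at h
    simp [ev1, h.1, ev1_zero b p h.2]

/-- evaluation of a bivariate integer polynomial -/
def ev (a b : F) : List (List ℤ) → F
  | [] => 0
  | c :: l => ev1 b c + a * ev a b l

def add2 : List (List ℤ) → List (List ℤ) → List (List ℤ)
  | [], q => q
  | c :: p, [] => c :: p
  | c :: p, d :: q => add1 c d :: add2 p q

def smul2 (k : List ℤ) : List (List ℤ) → List (List ℤ)
  | [] => []
  | c :: p => mul1 k c :: smul2 k p

def mul2 : List (List ℤ) → List (List ℤ) → List (List ℤ)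
  | [], _ => []
  | c :: p, q => add2 (smul2 c q) ([] :: mul2 p q)

def neg2 (p : List (List ℤ)) : List (List ℤ) := smul2 [-1] p

def zero2 : List (List ℤ) → Bool
  | [] => true
  | c :: p => zero1 c && zero2 p

theorem ev_add (a b : F) : ∀ p q, ev a b (add2 p q) = ev a b p + ev a b q
  | [], q => by simp [add2, ev]
  | c :: p, [] => by simp [add2, ev]
  | c :: p, d :: q => by simp [add2, ev, ev1_add, ev_add a b p q]; ring

theorem ev_smul (a b : F) (k : List ℤ) : ∀ p, ev a b (smul2 k p) = ev1 b k * ev a b p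
  | [] => by simp [smul2, ev]
  | c :: p => by simp [smul2, ev, ev1_mul, ev_smul a b k p]; ring

theorem ev_mul (a b : F) : ∀ p q, ev a b (mul2 p q) = ev a b p * ev a b q
  | [], q => by simp [mul2, ev]
  | c :: p, q => by simp [mul2, ev, ev1, ev_add, ev_smul, ev_mul a b p q]; ring

theorem ev_neg (a b : F) (p) : ev a b (neg2 p) = - ev a b p := by
  simp [neg2, ev_smul, ev1]

theorem ev_zero (a b : F) : ∀ p, zero2 p = true → ev a b p = 0
  | [], _ => rfl
  | c :: p, h => by
    simp only [zero2, Bool.and_eq_true] at h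
    simp [ev, ev1_zero b c h.1, ev_zero a b p h.2]

/-- The generic matrix. -/
def PM : Matrix (Fin 4) (Fin 14) (List (List ℤ)) :=
  !![[[1]], [], [], [],  [[1]], [[1]], [[1]], [], [], [],
        [[], [1]], [[0, 1]], [], [[0, 1], [-1]];
     [], [[1]], [], [],  [[-1]], [], [], [[1]], [[1]], [],
        [[-1], [-1]], [[-1, -1]], [[0, 1], [-1]], [];
     [], [], [[1]], [],  [], [[-1]], [], [[-1]], [], [[1]],
        [[1]], [], [[0, -1]], [[-1, -1]];
     [], [], [], [[1]],  [], [], [[-1]], [], [[-1]], [[-1]],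
        [], [[1]], [[], [1]], [[1], [1]]]

/-- The representation over `F` with parameters `a`, `b`. -/
def BM (a b : F) : Matrix (Fin 4) (Fin 14) F := fun i j => ev a b (PM i j)

def sub2 (p q : List (List ℤ)) := add2 p (neg2 q)

def d2 (i j : Fin 4) (c d : Fin 14) : List (List ℤ) :=
  sub2 (mul2 (PM i c) (PM j d)) (mul2 (PM j c) (PM i d))

def d3 (i j k : Fin 4) (c d e : Fin 14) : List (List ℤ) :=
  add2 (sub2 (mul2 (PM i c) (d2 j k d e)) (mul2 (PM j c) (d2 i k d e))) (mul2 (PM k c) (d2 i j d e))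

def d4 (c d e f : Fin 14) : List (List ℤ) :=
  add2 (sub2 (mul2 (PM 0 c) (d3 1 2 3 d e f)) (mul2 (PM 1 c) (d3 0 2 3 d e f)))
    (sub2 (mul2 (PM 2 c) (d3 0 1 3 d e f)) (mul2 (PM 3 c) (d3 0 1 2 d e f)))

theorem ev_sub (a b : F) (p q) : ev a b (sub2 p q) = ev a b p - ev a b q := by
  simp [sub2, ev_add, ev_neg, sub_eq_add_neg]

theorem ev_d4 (a b : F) (f : Fin 4 → Fin 14) :
    ((BM a b).submatrix id f).det = ev a b (d4 (f 0) (f 1) (f 2) (f 3)) := by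
  have h4 : ∀ M : Matrix (Fin 4) (Fin 4) F, M.det =
      (M 0 0 * (M 1 1 * (M 2 2 * M 3 3 - M 3 2 * M 2 3)
        - M 2 1 * (M 1 2 * M 3 3 - M 3 2 * M 1 3) + M 3 1 * (M 1 2 * M 2 3 - M 2 2 * M 1 3))
      - M 1 0 * (M 0 1 * (M 2 2 * M 3 3 - M 3 2 * M 2 3)
        - M 2 1 * (M 0 2 * M 3 3 - M 3 2 * M 0 3) + M 3 1 * (M 0 2 * M 2 3 - M 2 2 * M 0 3)))
      + (M 2 0 * (M 0 1 * (M 1 2 * M 3 3 - M 3 2 * M 1 3)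
        - M 1 1 * (M 0 2 * M 3 3 - M 3 2 * M 0 3) + M 3 1 * (M 0 2 * M 1 3 - M 1 2 * M 0 3))
      - M 3 0 * (M 0 1 * (M 1 2 * M 2 3 - M 2 2 * M 1 3)
        - M 1 1 * (M 0 2 * M 2 3 - M 2 2 * M 0 3) + M 2 1 * (M 0 2 * M 1 3 - M 1 2 * M 0 3))) := by
    intro M
    rw [Matrix.det_succ_column_zero]
    have e0 : (0 : Fin 4).succAbove = ![1, 2, 3] := by decide
    have e1 : (1 : Fin 4).succAbove = ![0, 2, 3] := by decide
    have e2 : (2 : Fin 4).succAbove = ![0, 1, 3] := by decide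
    have e3 : (3 : Fin 4).succAbove = ![0, 1, 2] := by decide
    simp only [Fin.sum_univ_four, Matrix.det_fin_three, Matrix.submatrix_apply, e0, e1, e2, e3]
    simp
    ring
  rw [h4]
  simp only [d4, d3, d2, ev_add, ev_sub, ev_mul, BM, Matrix.submatrix_apply, id]

/-- the fundamental units -/
def units : List (List (List ℤ)) :=
  [[[1]], [[], [1]], [[1], [1]], [[0, 1]], [[1, 1]], [[0, 1], [-1]]]

def isUnitP (d : List (List ℤ)) : Bool :=
  units.any fun u => units.any fun v =>
    let w := mul2 u v
    zero2 (sub2 d w) || zero2 (add2 d w)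

set_option maxRecDepth 100000 in
theorem check : ∀ i j : Fin 14, i < j → ∀ k : Fin 14, j < k → ∀ l : Fin 14, k < l →
    (zero2 (d4 i j k l) || isUnitP (d4 i j k l)) = true := by
  decide +kernel

theorem ev_unit {a b : F} (ha : a ≠ 0) (ha' : a + 1 ≠ 0) (hb : b ≠ 0) (hb' : b + 1 ≠ 0)
    (hab : a ≠ b) (u) (hu : u ∈ units) : ev a b u ≠ 0 := by
  have h : b - a ≠ 0 := sub_ne_zero.2 hab.symm
  simp only [units, List.mem_cons, List.not_mem_nil, or_false] at hu
  rcases hu with rfl | rfl | rfl | rfl | rfl | rfl <;> simp [ev, ev1, *]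
  · rwa [add_comm]
  · rwa [add_comm]
  · rwa [← sub_eq_add_neg]

theorem det_iff {a b : F} (ha : a ≠ 0) (ha' : a + 1 ≠ 0) (hb : b ≠ 0) (hb' : b + 1 ≠ 0)
    (hab : a ≠ b) (f : Fin 4 → Fin 14) (hf : StrictMono f) :
    ((BM a b).submatrix id f).det ≠ 0 ↔ zero2 (d4 (f 0) (f 1) (f 2) (f 3)) = false := by
  have hc := check (f 0) (f 1) (hf (by decide)) (f 2) (hf (by decide)) (f 3) (hf (by decide))
  rw [ev_d4]
  generalize d4 (f 0) (f 1) (f 2) (f 3) = d at *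
  cases hz : zero2 d
  · simp only [hz, Bool.false_or, isUnitP, List.any_eq_true, Bool.or_eq_true] at hc
    obtain ⟨u, hu, v, hv, h⟩ := hc
    have h1 := mul_ne_zero (ev_unit ha ha' hb hb' hab u hu) (ev_unit ha ha' hb hb' hab v hv)
    simp only [iff_true]
    intro h0
    rcases h with h | h
    · have := ev_zero a b _ h
      rw [ev_sub, h0, ev_mul] at this
      exact h1 (by simpa using this)
    · have := ev_zero a b _ h
      rw [ev_add, h0, ev_mul] at this
      exact h1 (by simpa using this)
  · simp [ev_zero a b d hz]

theorem li_iff {a b : F} (ha : a ≠ 0) (ha' : a + 1 ≠ 0) (hb : b ≠ 0) (hb' : b + 1 ≠ 0)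
    (hab : a ≠ b) (f : Fin 4 → Fin 14) (hf : StrictMono f) :
    LinearIndependent F (fun j => (BM a b).transpose (f j)) ↔
      zero2 (d4 (f 0) (f 1) (f 2) (f 3)) = false := by
  rw [← det_iff ha ha' hb hb' hab f hf, ← isUnit_iff_ne_zero, ← Matrix.isUnit_iff_isUnit_det,
    ← Matrix.linearIndependent_cols_iff_isUnit]
  rfl

end Poly

/-! ### Independent sets are determined by bases -/

theorem transfer {K L : Type*} [Field K] [Field L]
    (u : Fin 14 → Fin 4 → K) (v : Fin 14 → Fin 4 → L)
    (h : ∀ f : Fin 4 → Fin 14, StrictMono f →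
      (LinearIndependent K (fun j => u (f j)) → LinearIndependent L (fun j => v (f j))))
    (hu : ∃ f : Fin 4 → Fin 14, LinearIndependent K (fun j => u (f j)))
    (S : Set (Fin 14)) (hS : LinearIndependent K (fun j : S => u j)) :
    LinearIndependent L (fun j : S => v j) := by
  have hS' : LinearIndepOn K u S := hS
  obtain ⟨T, -, hST, hspan, hT⟩ := exists_linearIndepOn_extension hS' (Set.subset_univ S)
  obtain ⟨f₀, hf₀⟩ := hu
  have htop : (⊤ : Submodule K (Fin 4 → K)) ≤ Submodule.span K (Set.range fun j : T => u j) := by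
    rw [← hf₀.span_eq_top_of_card_eq_finrank' (by simp)]
    refine Submodule.span_le.2 ?_
    rintro _ ⟨j, rfl⟩
    have := hspan ⟨f₀ j, trivial, rfl⟩
    rwa [Set.image_eq_range] at this
  classical
  have hcard : T.toFinset.card = 4 := by
    have hT' : LinearIndependent K (fun j : T => u j) := hT
    have := Module.finrank_eq_card_basis (Module.Basis.mk hT' htop)
    rw [Set.toFinset_card]
    simpa using this.symm
  let f : Fin 4 ↪o Fin 14 := T.toFinset.orderEmbOfFin hcard
  have hr : Set.range f = T := by simp [f]
  have h1 : LinearIndependent K (fun j => u (f j)) := by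
    have : LinearIndepOn K u (Set.range f) := by rw [hr]; exact hT
    exact (linearIndepOn_range_iff f.injective u).1 this
  have h2 := h f f.strictMono h1
  have h3 : LinearIndepOn L v T := by
    rw [← hr]
    exact (linearIndepOn_range_iff f.injective v).2 h2
  exact h3.mono hST

theorem four_lt {F : Type*} [Field F] (t₁ t₂ t₃ : F) (h1 : t₁ ≠ 0) (h2 : t₂ ≠ 0) (h3 : t₃ ≠ 0)
    (h12 : t₁ ≠ t₂) (h13 : t₁ ≠ t₃) (h23 : t₂ ≠ t₃) : Infinite F ∨ 4 ≤ Nat.card F := by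
  classical
  rcases finite_or_infinite F with hF | hF
  · right
    have := Fintype.ofFinite F
    rw [Nat.card_eq_fintype_card]
    have hc : ({0, t₁, t₂, t₃} : Finset F).card = 4 := by
      rw [Finset.card_insert_of_notMem, Finset.card_insert_of_notMem,
        Finset.card_insert_of_notMem, Finset.card_singleton] <;>
      simp [*, h1.symm, h2.symm, h3.symm]
    rw [← hc]
    exact Finset.card_le_univ _
  · exact Or.inl hF

theorem exists_params {F : Type*} [Field F] (h : Infinite F ∨ 4 ≤ Nat.card F) :
    ∃ a b : F, a ≠ 0 ∧ a + 1 ≠ 0 ∧ b ≠ 0 ∧ b + 1 ≠ 0 ∧ a ≠ b := by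
  classical
  have key : ∀ s : Finset F, s.card < 4 → ∃ x, x ∉ s := by
    intro s hs
    rcases finite_or_infinite F with hF | hF
    · have := Fintype.ofFinite F
      have h4 : 4 ≤ Nat.card F := h.resolve_left (not_infinite_iff_finite.2 hF)
      rw [Nat.card_eq_fintype_card] at h4
      by_contra! hc
      have : s = Finset.univ := by ext; simp [hc]
      rw [this, Finset.card_univ] at hs
      omega
    · exact Infinite.exists_notMem_finset s
  obtain ⟨a, ha⟩ := key {0, -1} (lt_of_le_of_lt Finset.card_le_two (by norm_num))
  obtain ⟨b, hb⟩ := key {0, -1, a} (lt_of_le_of_lt Finset.card_le_three (by norm_num))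
  simp only [Finset.mem_insert, Finset.mem_singleton, not_or] at ha hb
  exact ⟨a, b, ha.1, fun h => ha.2 (eq_neg_of_add_eq_zero_left h), hb.1,
    fun h => hb.2.1 (eq_neg_of_add_eq_zero_left h), Ne.symm hb.2.2⟩

/-- the ratio attached to a fifth column -/
theorem ratio {F V : Type*} [Field F] [AddCommGroup V] [Module F V] (w0 w1 w2 w3 x : V)
    (h0 : LinearIndependent F ![w0, w1, w2, w3]) (h5 : ¬ LinearIndependent F ![w0, w1, w2, w3, x])
    (h2 : LinearIndependent F ![w0, w1, w2, x]) (h3 : LinearIndependent F ![w0, w1, w3, x]) :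
    ∃ t c d e : F, t ≠ 0 ∧ e ≠ 0 ∧ c • w0 + d • w1 + t • w2 + w3 = e • x := by
  rw [Fintype.not_linearIndependent_iff] at h5
  rw [Fintype.linearIndependent_iff] at h0 h2 h3
  obtain ⟨g, hg, hne⟩ := h5
  have hg' : g 0 • w0 + g 1 • w1 + g 2 • w2 + g 3 • w3 + g 4 • x = 0 := by
    simpa [Fin.sum_univ_five] using hg
  have n4 : g 4 ≠ 0 := by
    intro h4
    have hz := h0 ![g 0, g 1, g 2, g 3] (by
      simpa [Fin.sum_univ_four, h4] using hg')
    obtain ⟨i, hi⟩ := hne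
    apply hi
    have z0 := hz 0
    have z1 := hz 1
    have z2 := hz 2
    have z3 := hz 3
    simp at z0 z1 z2 z3
    fin_cases i <;> simp [*]
  have n3 : g 3 ≠ 0 := by
    intro h3'
    have hz := h2 ![g 0, g 1, g 2, g 4] (by
      simpa [Fin.sum_univ_four, h3'] using hg') 3
    exact n4 (by simpa using hz)
  have n2 : g 2 ≠ 0 := by
    intro h2'
    have hz := h3 ![g 0, g 1, g 3, g 4] (by
      simpa [Fin.sum_univ_four, h2'] using hg') 3
    exact n4 (by simpa using hz)
  refine ⟨g 2 / g 3, g 0 / g 3, g 1 / g 3, -(g 4 / g 3), div_ne_zero n2 n3,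
    neg_ne_zero.2 (div_ne_zero n4 n3), ?_⟩
  have hs := congrArg (fun v => (g 3)⁻¹ • v) hg'
  simp only [smul_add, smul_smul, inv_mul_cancel₀ n3, one_smul, smul_zero] at hs
  rw [neg_smul, eq_neg_iff_add_eq_zero, ← hs]
  simp only [div_eq_inv_mul]

theorem ratio_ne {F V : Type*} [Field F] [AddCommGroup V] [Module F V] (w0 w1 w2 w3 x y : V)
    (h : LinearIndependent F ![w0, w1, x, y]) {t c d e t' c' d' e' : F} (he : e ≠ 0)
    (h1 : c • w0 + d • w1 + t • w2 + w3 = e • x)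
    (h2 : c' • w0 + d' • w1 + t' • w2 + w3 = e' • y) : t ≠ t' := by
  rintro rfl
  rw [Fintype.linearIndependent_iff] at h
  have := h ![c - c', d - d', -e, e'] (by
    simp [Fin.sum_univ_succ, ← h1, ← h2]
    module) 2
  simp at this
  exact he this

/-- the scaling factors of the columns -/
def wt {K : Type*} [Field K] (α : K) (j : Fin 14) : K :=
  if j = 12 then α ^ 2 else if j = 13 then α else 1

theorem matA_eq (α : GaloisField 2 2) (hα : α ^ 2 = α + 1) (j : Fin 14) :
    (matI4D4P0 α).transpose j = wt α j • (BM α (α + 1)).transpose j := by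
  have h2 : (1 : GaloisField 2 2) + 1 = 0 := CharTwo.add_self_eq_zero 1
  have hn : (-1 : GaloisField 2 2) = 1 := CharTwo.neg_eq 1
  ext i
  fin_cases j <;> fin_cases i <;>
    simp [matI4D4P0, wt, BM, PM, ev, ev1, hn] <;> grind

theorem matA_li (α : GaloisField 2 2) (hα : α ^ 2 = α + 1) (f : Fin 4 → Fin 14)
    (hf : StrictMono f) :
    LinearIndependent (GaloisField 2 2) (fun j => (matI4D4P0 α).transpose (f j)) ↔
      zero2 (d4 (f 0) (f 1) (f 2) (f 3)) = false := by
  have h2 : (1 : GaloisField 2 2) + 1 = 0 := CharTwo.add_self_eq_zero 1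
  have ha : α ≠ 0 := by rintro rfl; simp at hα
  have ha' : α + 1 ≠ 0 := by rw [← hα]; exact pow_ne_zero _ ha
  have hb' : α + 1 + 1 ≠ 0 := by rwa [add_assoc, h2, add_zero]
  have hab : α ≠ α + 1 := by simp
  rw [← li_iff ha ha' ha' hb' hab f hf]
  have hw : ∀ j, wt α j ≠ 0 := by
    intro j; unfold wt; split_ifs <;> simp [ha]
  have : (fun j => (matI4D4P0 α).transpose (f j)) =
      (fun j => Units.mk0 (wt α (f j)) (hw (f j))) • fun j => (BM α (α + 1)).transpose (f j) := by
    funext j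
    exact matA_eq α hα (f j)
  rw [this]
  exact LinearIndependent.units_smul_iff _ _

theorem forward (α : GaloisField 2 2) (hα : α ^ 2 = α + 1) (F : Type*) [Field F]
    (h : RealizesColumnMatroid (matI4D4P0 α) F) : Infinite F ∨ 4 ≤ Nat.card F := by
  obtain ⟨n, B, hB⟩ := h
  have hB' : ∀ {m : ℕ} (f : Fin m → Fin 14), Function.Injective f →
      (LinearIndependent F (fun j => B.transpose (f j)) ↔
        LinearIndependent (GaloisField 2 2) (fun j => (matI4D4P0 α).transpose (f j))) := by
    intro m f hf
    have := hB (Set.range f)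
    exact (linearIndepOn_range_iff hf B.transpose).symm.trans
      (this.trans (linearIndepOn_range_iff hf (matI4D4P0 α).transpose))
  let w := B.transpose
  have h4 : ∀ i j k l : Fin 14, i < j → j < k → k < l → zero2 (d4 i j k l) = false →
      LinearIndependent F ![w i, w j, w k, w l] := by
    intro i j k l hij hjk hkl hz
    have hf : StrictMono ![i, j, k, l] := by
      rw [Fin.strictMono_iff_lt_succ]
      intro x
      fin_cases x <;> simp [*]
    have := (hB' _ hf.injective).2 ((matA_li α hα _ hf).2 hz)
    convert this using 1
    funext x
    fin_cases x <;> rfl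
  have h5 : ∀ k : Fin 14, 3 < k → ¬ LinearIndependent F ![w 0, w 1, w 2, w 3, w k] := by
    intro k hk hl
    have hf : StrictMono ![0, 1, 2, 3, k] := by
      rw [Fin.strictMono_iff_lt_succ]
      intro x
      fin_cases x <;> simp [*]
    have h' : LinearIndependent F (fun j => B.transpose ((![0, 1, 2, 3, k] : Fin 5 → Fin 14) j)) := by
      convert hl using 1
      funext x
      fin_cases x <;> rfl
    have := ((hB' _ hf.injective).1 h').fintype_card_le_finrank
    simp at this
  have hr : ∀ k : Fin 14, 3 < k → zero2 (d4 0 1 2 k) = false → zero2 (d4 0 1 3 k) = false →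
      ∃ t c d e : F, t ≠ 0 ∧ e ≠ 0 ∧ c • w 0 + d • w 1 + t • w 2 + w 3 = e • w k := by
    intro k hk h2 h3
    exact ratio _ _ _ _ _ (h4 0 1 2 3 (by decide) (by decide) (by decide) (by decide)) (h5 k hk)
      (h4 0 1 2 k (by decide) (by decide) (lt_trans (by decide) hk) h2)
      (h4 0 1 3 k (by decide) (by decide) hk h3)
  obtain ⟨t₁, c₁, d₁, e₁, ht₁, he₁, r₁⟩ := hr 9 (by decide) (by decide) (by decide)
  obtain ⟨t₂, c₂, d₂, e₂, ht₂, he₂, r₂⟩ := hr 12 (by decide) (by decide) (by decide)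
  obtain ⟨t₃, c₃, d₃, e₃, ht₃, he₃, r₃⟩ := hr 13 (by decide) (by decide) (by decide)
  refine four_lt t₁ t₂ t₃ ht₁ ht₂ ht₃ ?_ ?_ ?_
  · exact ratio_ne _ _ _ _ _ _ (h4 0 1 9 12 (by decide) (by decide) (by decide) (by decide)) he₁ r₁ r₂
  · exact ratio_ne _ _ _ _ _ _ (h4 0 1 9 13 (by decide) (by decide) (by decide) (by decide)) he₁ r₁ r₃
  · exact ratio_ne _ _ _ _ _ _ (h4 0 1 12 13 (by decide) (by decide) (by decide) (by decide)) he₂ r₂ r₃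

theorem backward (α : GaloisField 2 2) (hα : α ^ 2 = α + 1) (F : Type*) [Field F]
    (h : Infinite F ∨ 4 ≤ Nat.card F) : RealizesColumnMatroid (matI4D4P0 α) F := by
  obtain ⟨a, b, ha, ha', hb, hb', hab⟩ := exists_params h
  have hf : StrictMono (![0, 1, 2, 3] : Fin 4 → Fin 14) := by decide
  refine ⟨4, BM a b, fun S => ⟨fun hS => ?_, fun hS => ?_⟩⟩
  · refine transfer _ _ (fun f hf => ?_) ⟨![0, 1, 2, 3], ?_⟩ S hS
    · rw [matA_li α hα f hf, li_iff ha ha' hb hb' hab f hf]; exact id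
    · rw [li_iff ha ha' hb hb' hab _ hf]; decide
  · refine transfer _ _ (fun f hf => ?_) ⟨![0, 1, 2, 3], ?_⟩ S hS
    · rw [matA_li α hα f hf, li_iff ha ha' hb hb' hab f hf]; exact id
    · rw [matA_li α hα _ hf]; decide

end Stmt18

/-- A field `F` realizes the column matroid of `[I₄ | D₄ | P₀]` iff `F` is infinite or
has at least 4 elements (the universal partial field of this matroid is the 2-regular
partial field `𝕌₂`). -/
theorem stmt_18 (α : GaloisField 2 2) (hα : α ^ 2 = α + 1) (F : Type*) [Field F] :
    RealizesColumnMatroid (matI4D4P0 α) F ↔ (Infinite F ∨ 4 ≤ Nat.card F) := by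
  exact ⟨Stmt18.forward α hα F, Stmt18.backward α hα F⟩
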